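/- Suppose (M_i)_{i ∈ I} is a family of pairwise disjoint nonempty Borel subsets of ℝ whose union is ℝ, and each M_i is closed under multiplication. Then the cardinality κ of I satisfies: κ ∈ {1, 2, 3, 4}, or κ ≥ cov(𝒩) and κ ≥ cov(ℳ). -/

import Mathlib

/-- `cov(𝒩)`: the least cardinality of a family of Lebesgue null subsets of `ℝ` covering `ℝ`. -/
noncomputable def covNull : Cardinal :=
  sInf { c : Cardinal | ∃ S : Set (Set ℝ), Cardinal.mk S = c ∧
    (∀ A ∈ S, MeasureTheory.volume A = 0) ∧ ⋃₀ S = Set.univ }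

/-- `cov(ℳ)`: the least cardinality of a family of meager subsets of `ℝ` covering `ℝ`. -/
noncomputable def covMeager : Cardinal :=
  sInf { c : Cardinal | ∃ S : Set (Set ℝ), Cardinal.mk S = c ∧
    (∀ A ∈ S, IsMeagre A) ∧ ⋃₀ S = Set.univ }

/-!
On the positive reals the logarithm turns multiplication into addition, so consider a partition of
`ℝ` into measurable sets closed under addition. If there are fewer than `cov(𝒩)` pieces, then some
piece `P` is non-null on the positive half-line, as otherwise the translates by natural numbers of
the positive parts would give a cover of `ℝ` by too few null sets, and by a Steinhaus theorem
`P + P ⊆ P` contains an interval of positive reals. Every positive real has a rational multiple in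
that interval, and positive rational multiples stay in the same piece, so `P` contains all positive
reals; likewise one piece contains all negative reals. Back in the multiplicative setting, `(0, 1)`
and `(1, ∞)` each lie in one piece, and a negative number lies in the piece of its square, so at
most two further pieces exist, those of `0` and `1`. The same argument works for the meager ideal.
-/

open Set Filter MeasureTheory Function
open scoped Topology Pointwise

universe u

section CoveringNumber

/-- The covering number of the ideal dual to the filter `l`: the least cardinality of a family of
`l`-small sets (those whose complement is in `l`) covering the whole type. -/
noncomputable def coveringNumber {X : Type u} (l : Filter X) : Cardinal.{u} :=
  sInf {c | ∃ S : Set (Set X), Cardinal.mk S = c ∧ (∀ A ∈ S, ∀ᶠ x in l, x ∉ A) ∧ ⋃₀ S = univ}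

theorem covNull_eq_coveringNumber : covNull = coveringNumber (ae (volume : Measure ℝ)) := by
  simp only [covNull, coveringNumber, measure_eq_zero_iff_ae_notMem]

theorem covMeager_eq_coveringNumber : covMeager = coveringNumber (residual ℝ) := rfl

theorem coveringNumber_le_mk {X ι : Type u} {l : Filter X} {N : ι → Set X}
    (hN : ∀ i, ∀ᶠ x in l, x ∉ N i) (hcover : ⋃ i, N i = univ) :
    coveringNumber l ≤ Cardinal.mk ι :=
  calc coveringNumber l
    _ ≤ Cardinal.mk (range N) :=
      csInf_le' ⟨range N, rfl, forall_mem_range.2 hN, by rwa [sUnion_range]⟩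
    _ ≤ Cardinal.mk ι := Cardinal.mk_range_le

theorem exists_frequently_eq_and_pos {ι : Type} {π : ℝ → ι} {l : Filter ℝ}
    [CountableInterFilter l] (htrans : ∀ c, Tendsto (· + c) l l)
    (hcard : Cardinal.mk ι < coveringNumber l) : ∃ i, ∃ᶠ x in l, π x = i ∧ 0 < x := by
  contrapose! hcard with hsmall
  refine coveringNumber_le_mk (N := fun i => {x | ∃ n : ℕ, π (x + n) = i ∧ 0 < x + n})
    (fun i => ?_) (eq_univ_of_forall fun x => ?_)
  · have hshift (n : ℕ) : ∀ᶠ x in l, π (x + n) = i → x + n ≤ 0 :=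
      (htrans n).eventually (hsmall i)
    filter_upwards [eventually_countable_forall.2 hshift] with x hx
    rintro ⟨n, hn, hn_pos⟩
    exact (hx n hn).not_gt hn_pos
  · obtain ⟨n, hn⟩ := exists_nat_gt (-x)
    exact mem_iUnion.2 ⟨π (x + n), n, rfl, neg_lt_iff_pos_add'.1 hn⟩

end CoveringNumber

section Steinhaus

theorem eventuallyMeasurableSet_preimage {X Y : Type*} [mX : MeasurableSpace X]
    [mY : MeasurableSpace Y] {l : Filter X} {l' : Filter Y} [CountableInterFilter l]
    [CountableInterFilter l'] {f : X → Y} (hf : Measurable f) (hlim : Tendsto f l l') {A : Set Y}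
    (hA : EventuallyMeasurableSet mY l' A) : EventuallyMeasurableSet mX l (f ⁻¹' A) := by
  obtain ⟨B, hB, hAB⟩ := hA
  exact ⟨f ⁻¹' B, hf hB, hAB.comp_tendsto hlim⟩

/-- A σ-filter on an additive group is a Steinhaus filter if its dual ideal is invariant under
right translations and negation, and `A + A` has an interior point for each set `A` outside the
ideal that is measurable modulo the ideal. -/
structure IsSteinhausFilter {G : Type*} [AddGroup G] [TopologicalSpace G] [mG : MeasurableSpace G]
    (l : Filter G) [CountableInterFilter l] : Prop where
  tendsto_add_right (c : G) : Tendsto (· + c) l l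
  tendsto_neg : Tendsto Neg.neg l l
  interior_add_self_nonempty {A : Set G} (hA : EventuallyMeasurableSet mG l A)
    (hfreq : ∃ᶠ x in l, x ∈ A) : (interior (A + A)).Nonempty

theorem exists_measure_inter_preimage_neg_add_ne_zero {G : Type*} [AddGroup G] [MeasurableSpace G]
    [MeasurableAdd₂ G] [MeasurableNeg G] (μ : Measure G) [SFinite μ] [μ.IsAddLeftInvariant]
    {A : Set G} (hA : MeasurableSet A) (hA_pos : μ A ≠ 0) :
    ∃ c, μ (A ∩ (fun x => -x + c) ⁻¹' A) ≠ 0 := by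
  by_contra! hnull
  let f : G × G → G × G := fun z => (z.2, -z.2 + z.1)
  have hf : MeasurePreserving f (μ.prod μ) (μ.prod μ) := measurePreserving_prod_neg_add_swap μ μ
  have hAA : MeasurableSet (A ×ˢ A) := hA.prod hA
  have hpre : μ.prod μ (f ⁻¹' (A ×ˢ A)) = 0 :=
    (Measure.measure_prod_null (hf.measurable hAA)).2 (Eventually.of_forall hnull)
  rw [hf.measure_preimage hAA.nullMeasurableSet, Measure.prod_prod] at hpre
  exact hA_pos (mul_self_eq_zero.1 hpre)

variable {G : Type*} [AddGroup G] [TopologicalSpace G] [IsTopologicalAddGroup G]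

theorem interior_add_self_nonempty_of_not_isMeagre [BaireSpace G] {A : Set G}
    (hA : BaireMeasurableSet A) (hA_pos : ¬IsMeagre A) : (interior (A + A)).Nonempty := by
  obtain ⟨U, hU, hAU⟩ := hA.residualEq_isOpen
  have hUne : U.Nonempty := by
    rw [nonempty_iff_ne_empty]
    rintro rfl
    exact hA_pos (eventuallyEq_empty.1 hAU)
  suffices hUA : U + U ⊆ A + A from (hUne.add hUne).mono (interior_maximal hUA hU.add_left)
  rintro _ ⟨u, hu, v, hv, rfl⟩
  have hreflect : ∀ᶠ x in residual G, -x + (u + v) ∈ A ↔ -x + (u + v) ∈ U :=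
    let e := (Homeomorph.neg G).trans (Homeomorph.addRight (u + v))
    (tendsto_residual_of_isOpenMap e.continuous e.isOpenMap).eventually hAU.mem_iff
  obtain ⟨x, ⟨hxU, hxU'⟩, hxA, hxA'⟩ :=
    (dense_of_mem_residual (hAU.mem_iff.and hreflect)).inter_open_nonempty
      (U ∩ (fun x => -x + (u + v)) ⁻¹' U) (hU.inter (hU.preimage (by fun_prop)))
      ⟨u, hu, by simpa using hv⟩
  exact ⟨x, hxA.2 hxU, _, hxA'.2 hxU', by simp⟩

theorem isSteinhausFilter_residual [BaireSpace G] [MeasurableSpace G] [BorelSpace G] :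
    IsSteinhausFilter (residual G) where
  tendsto_add_right c := (Homeomorph.addRight c).residual_map_eq.le
  tendsto_neg := (Homeomorph.neg G).residual_map_eq.le
  interior_add_self_nonempty := by
    rintro A ⟨B, hB, hAB⟩ hfreq
    exact interior_add_self_nonempty_of_not_isMeagre (hB.baireMeasurableSet.congr hAB.symm) hfreq

variable [LocallyCompactSpace G] [SecondCountableTopology G] [MeasurableSpace G] [BorelSpace G]
  (μ : Measure G) [μ.IsAddHaarMeasure]

theorem interior_add_self_nonempty_of_measure_ne_zero {A : Set G} (hA : NullMeasurableSet A μ)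
    (hA_pos : μ A ≠ 0) : (interior (A + A)).Nonempty := by
  wlog hA_meas : MeasurableSet A generalizing A
  · obtain ⟨B, hBA, hB, hBA_ae⟩ := hA.exists_measurable_subset_ae_eq
    have hB_pos : μ B ≠ 0 := by rwa [measure_congr hBA_ae]
    exact (this hB.nullMeasurableSet hB_pos hB).mono (interior_mono (add_subset_add hBA hBA))
  obtain ⟨c, hc⟩ := exists_measure_inter_preimage_neg_add_ne_zero μ hA_meas hA_pos
  have hE : MeasurableSet (A ∩ (fun x => -x + c) ⁻¹' A) :=
    hA_meas.inter ((by fun_prop : Measurable fun x : G => -x + c) hA_meas)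
  have hsub := Measure.sub_mem_nhds_zero_of_addHaar_pos μ _ hE (pos_iff_ne_zero.2 hc)
  have hlim : Tendsto (· - c) (𝓝 c) (𝓝 0) := by
    simpa using (continuous_sub_right c).tendsto c
  refine ⟨c, mem_interior_iff_mem_nhds.2 ?_⟩
  filter_upwards [hlim hsub] with z hz
  obtain ⟨x, hx, y, hy, hxy⟩ := mem_sub.1 hz
  exact ⟨x, hx.1, -y + c, hy.2, by simpa [sub_eq_add_neg, add_assoc] using congrArg (· + c) hxy⟩

theorem isSteinhausFilter_ae : IsSteinhausFilter (ae μ) where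
  tendsto_add_right c := (quasiMeasurePreserving_add_right μ c).tendsto_ae
  tendsto_neg := (quasiMeasurePreserving_neg μ).tendsto_ae
  interior_add_self_nonempty hA hfreq :=
    interior_add_self_nonempty_of_measure_ne_zero μ hA (frequently_ae_mem_iff.1 hfreq)

end Steinhaus

section ClosedFibers

variable {ι : Type*}

/-- The map `π`, viewed as the partition into its fibers, has all fibers closed under
multiplication. -/
@[to_additive]
def HasMulClosedFibers {S : Type*} [Mul S] (π : S → ι) : Prop :=
  ∀ ⦃x y⦄, π x = π y → π (x * y) = π x

@[to_additive]
theorem HasMulClosedFibers.apply_pow {S : Type*} [Monoid S] {π : S → ι}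
    (hπ : HasMulClosedFibers π) (x : S) {n : ℕ} (hn : n ≠ 0) : π (x ^ n) = π x := by
  obtain ⟨n, rfl⟩ := Nat.exists_eq_succ_of_ne_zero hn
  clear hn
  induction n with
  | zero => rw [pow_one]
  | succ n ih => rw [pow_succ, hπ ih, ih]

theorem HasAddClosedFibers.apply_nnrat_smul {V : Type*} [AddCommMonoid V] [Module ℚ≥0 V]
    {π : V → ι} (hπ : HasAddClosedFibers π) {q : ℚ≥0} (hq : q ≠ 0) (x : V) :
    π (q • x) = π x := by
  have hclear : q.den • q • x = q.num • x := by
    rw [← Nat.cast_smul_eq_nsmul ℚ≥0, ← Nat.cast_smul_eq_nsmul ℚ≥0, smul_smul, q.den_mul_eq_num]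
  calc π (q • x)
    _ = π (q.den • q • x) := (hπ.apply_nsmul _ q.den_ne_zero).symm
    _ = π (q.num • x) := by rw [hclear]
    _ = π x := hπ.apply_nsmul _ (NNRat.num_ne_zero.2 hq)

theorem HasAddClosedFibers.comp_neg {G : Type*} [SubtractionCommMonoid G] {π : G → ι}
    (hπ : HasAddClosedFibers π) : HasAddClosedFibers fun x => π (-x) := fun x y hxy =>
  (congrArg π (neg_add x y)).trans (hπ hxy)

theorem HasMulClosedFibers.comp_exp {π : ℝ → ι} (hπ : HasMulClosedFibers π) :
    HasAddClosedFibers fun t => π (Real.exp t) := fun x y hxy =>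
  (congrArg π (Real.exp_add x y)).trans (hπ hxy)

end ClosedFibers

theorem exists_nnrat_smul_mem_of_isOpen {U : Set ℝ} (hU : IsOpen U) (hUne : U.Nonempty)
    (hUpos : U ⊆ Ioi 0) {x : ℝ} (hx : 0 < x) : ∃ q : ℚ≥0, q ≠ 0 ∧ q • x ∈ U := by
  obtain ⟨u, hu⟩ := hUne
  obtain ⟨_, hqU, q, rfl⟩ := Rat.denseRange_cast.inter_open_nonempty ((· * x) ⁻¹' U)
    (hU.preimage (continuous_mul_const x)) ⟨u / x, by simpa [hx.ne'] using hu⟩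
  have hq : 0 < q := Rat.cast_pos.1 (pos_of_mul_pos_left (hUpos hqU) hx.le)
  lift q to ℚ≥0 using hq.le
  exact ⟨q, (NNRat.coe_pos.1 hq).ne', by simpa [NNRat.smul_def] using hqU⟩

theorem quasiMeasurePreserving_exp : Measure.QuasiMeasurePreserving Real.exp := by
  refine ⟨Real.measurable_exp, Measure.AbsolutelyContinuous.mk fun s hs hs_null => ?_⟩
  have hpre : Real.exp ⁻¹' s ⊆ Real.log '' (s ∩ Ioi 0) := fun x hx =>
    ⟨Real.exp x, ⟨hx, Real.exp_pos x⟩, Real.log_exp x⟩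
  have hlog : DifferentiableOn ℝ Real.log (s ∩ Ioi 0) := fun x hx =>
    (Real.differentiableAt_log (ne_of_gt hx.2)).differentiableWithinAt
  rw [Measure.map_apply Real.measurable_exp hs]
  exact measure_mono_null hpre (addHaar_image_eq_zero_of_differentiableOn_of_addHaar_eq_zero _ hlog
    (measure_mono_null inter_subset_left hs_null))

theorem tendsto_exp_residual : Tendsto Real.exp (residual ℝ) (residual ℝ) :=
  tendsto_residual_of_isOpenMap Real.continuous_exp Real.isOpenEmbedding_exp.isOpenMap

section FewPieces

variable {ι : Type} {π : ℝ → ι} {l : Filter ℝ} [CountableInterFilter l]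

theorem HasAddClosedFibers.exists_forall_pos_eq (hπ : HasAddClosedFibers π)
    (hl : IsSteinhausFilter l)
    (hmeas : ∀ i, EventuallyMeasurableSet Real.measurableSpace l (π ⁻¹' {i}))
    (hcard : Cardinal.mk ι < coveringNumber l) : ∃ i, ∀ x, 0 < x → π x = i := by
  obtain ⟨i, hi⟩ := exists_frequently_eq_and_pos (π := π) hl.tendsto_add_right hcard
  have hne : (interior ((π ⁻¹' {i} ∩ Ioi 0) + (π ⁻¹' {i} ∩ Ioi 0))).Nonempty :=
    hl.interior_add_self_nonempty
      (MeasurableSet.inter (hmeas i) measurableSet_Ioi.eventuallyMeasurableSet) hi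
  have hsum : (π ⁻¹' {i} ∩ Ioi 0) + (π ⁻¹' {i} ∩ Ioi 0) ⊆ π ⁻¹' {i} ∩ Ioi 0 := by
    rintro _ ⟨x, ⟨hx, hx_pos⟩, y, ⟨hy, hy_pos⟩, rfl⟩
    exact ⟨(hπ (hx.trans hy.symm)).trans hx, add_pos (mem_Ioi.1 hx_pos) (mem_Ioi.1 hy_pos)⟩
  have hint := interior_subset.trans hsum
  refine ⟨i, fun x hx => ?_⟩
  obtain ⟨q, hq, hqx⟩ := exists_nnrat_smul_mem_of_isOpen isOpen_interior hne
    (hint.trans inter_subset_right) hx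
  exact (hπ.apply_nnrat_smul hq x).symm.trans (hint hqx).1

theorem HasAddClosedFibers.exists_forall_neg_eq (hπ : HasAddClosedFibers π)
    (hl : IsSteinhausFilter l)
    (hmeas : ∀ i, EventuallyMeasurableSet Real.measurableSpace l (π ⁻¹' {i}))
    (hcard : Cardinal.mk ι < coveringNumber l) : ∃ i, ∀ x < 0, π x = i := by
  obtain ⟨i, hi⟩ := hπ.comp_neg.exists_forall_pos_eq hl
    (fun i => eventuallyMeasurableSet_preimage measurable_neg hl.tendsto_neg (hmeas i)) hcard
  exact ⟨i, fun x hx => by simpa using hi (-x) (neg_pos.2 hx)⟩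

theorem HasMulClosedFibers.mk_le_four (hπ : HasMulClosedFibers π) (hsurj : Surjective π)
    (hl : IsSteinhausFilter l) (hexp : Tendsto Real.exp l l)
    (hmeas : ∀ i, EventuallyMeasurableSet Real.measurableSpace l (π ⁻¹' {i}))
    (hcard : Cardinal.mk ι < coveringNumber l) : Cardinal.mk ι ≤ 4 := by
  have hmeas_exp (i : ι) := eventuallyMeasurableSet_preimage Real.measurable_exp hexp (hmeas i)
  obtain ⟨p, hp⟩ := hπ.comp_exp.exists_forall_pos_eq hl hmeas_exp hcard
  obtain ⟨q, hq⟩ := hπ.comp_exp.exists_forall_neg_eq hl hmeas_exp hcard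
  have hgt {y : ℝ} (hy : 1 < y) : π y = p := by
    simpa [Real.exp_log (zero_lt_one.trans hy)] using hp _ (Real.log_pos hy)
  have hlt {y : ℝ} (hy₀ : 0 < y) (hy : y < 1) : π y = q := by
    simpa [Real.exp_log hy₀] using hq _ (Real.log_neg hy₀ hy)
  have hpieces : Surjective ![p, q, π 0, π 1] := fun i => by
    obtain ⟨x, rfl⟩ := hsurj i
    rcases eq_or_ne x 0 with rfl | hx
    · exact ⟨2, rfl⟩
    rw [← hπ.apply_pow x two_ne_zero]
    rcases lt_trichotomy (x ^ 2) 1 with h | h | h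
    · exact ⟨1, (hlt (sq_pos_of_ne_zero hx) h).symm⟩
    · exact ⟨3, by rw [h]; rfl⟩
    · exact ⟨0, (hgt h).symm⟩
  simpa using Cardinal.mk_le_of_surjective hpieces

end FewPieces

theorem cardinal_eq_one_or_two_or_three_or_four {c : Cardinal} (hc : c ≠ 0) (hc4 : c ≤ 4) :
    c = 1 ∨ c = 2 ∨ c = 3 ∨ c = 4 := by
  obtain ⟨n, rfl⟩ := Cardinal.lt_aleph0.1 (hc4.trans_lt (Cardinal.natCast_lt_aleph0 (n := 4)))
  norm_cast at hc hc4 ⊢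
  lia

theorem stmt_8_general {ι : Type} (M : ι → Set ℝ)
    (hnull : ∀ i, NullMeasurableSet (M i))
    (hbaire : ∀ i, BaireMeasurableSet (M i))
    (hne : ∀ i, (M i).Nonempty)
    (hdisj : Pairwise (Function.onFun Disjoint M))
    (hcover : (⋃ i, M i) = Set.univ)
    (hmul : ∀ i, ∀ x ∈ M i, ∀ y ∈ M i, x * y ∈ M i) :
    Cardinal.mk ι = 1 ∨ Cardinal.mk ι = 2 ∨ Cardinal.mk ι = 3 ∨ Cardinal.mk ι = 4 ∨
      (covNull ≤ Cardinal.mk ι ∧ covMeager ≤ Cardinal.mk ι) := by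
  let hM := IndexedPartition.mk' M hdisj hne (iUnion_eq_univ_iff.1 hcover)
  have hfiber (i : ι) : hM.index ⁻¹' {i} = M i := ext fun _ => hM.mem_iff_index_eq.symm
  have hclosed : HasMulClosedFibers hM.index := fun x y hxy =>
    hM.mem_iff_index_eq.1 (hmul _ x (hM.mem_index x) y (hxy ▸ hM.mem_index y))
  have hsurj : Surjective hM.index := fun i => ⟨hM.some i, hM.index_some i⟩
  rcases le_or_gt (Cardinal.mk ι) 4 with h4 | h4
  · have hpos : Cardinal.mk ι ≠ 0 := Cardinal.mk_ne_zero_iff.2 ⟨hM.index 0⟩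
    have hsmall := cardinal_eq_one_or_two_or_three_or_four hpos h4
    tauto
  · refine .inr (.inr (.inr (.inr ⟨?_, ?_⟩)))
    · rw [covNull_eq_coveringNumber]
      exact le_of_not_gt fun hcard => h4.not_ge <| hclosed.mk_le_four hsurj
        (isSteinhausFilter_ae volume) quasiMeasurePreserving_exp.tendsto_ae
        (fun i => (hfiber i).symm ▸ hnull i) hcard
    · rw [covMeager_eq_coveringNumber]
      exact le_of_not_gt fun hcard => h4.not_ge <| hclosed.mk_le_four hsurj
        isSteinhausFilter_residual tendsto_exp_residual (fun i => (hfiber i).symm ▸ hbaire i) hcard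

/-- If `ℝ` is partitioned into nonempty Borel sets closed under multiplication, then the number
of pieces is `1`, `2`, `3`, `4`, or at least `max(cov(𝒩), cov(ℳ))`. -/
theorem stmt_8 {ι : Type} (M : ι → Set ℝ)
    (hmeas : ∀ i, MeasurableSet (M i))
    (hne : ∀ i, (M i).Nonempty)
    (hdisj : Pairwise (Function.onFun Disjoint M))
    (hcover : (⋃ i, M i) = Set.univ)
    (hmul : ∀ i, ∀ x ∈ M i, ∀ y ∈ M i, x * y ∈ M i) :
    Cardinal.mk ι = 1 ∨ Cardinal.mk ι = 2 ∨ Cardinal.mk ι = 3 ∨ Cardinal.mk ι = 4 ∨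
      (covNull ≤ Cardinal.mk ι ∧ covMeager ≤ Cardinal.mk ι) :=
  stmt_8_general M (fun i => (hmeas i).nullMeasurableSet) (fun i => (hmeas i).baireMeasurableSet)
    hne hdisj hcover hmul
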